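/- Let E > 0. For all n, m ∈ ℕ₀ and both signs, the regularized integral of F^±_{n,m} over ℝ² exists and equals the Kronecker delta: lim_{ε→0⁺} ∬_{ℝ²} e^{−ε(t²+x²)} F^±_{n,m}(t,x) dt dx = δ_{nm}. -/

import Mathlib

open MeasureTheory Filter Complex

/-- The explicit expression `F^±_{m,n}` for `m ≥ n` (sign `s = ±1`). -/
noncomputable def Fge (E s : ℝ) (m n : ℕ) (t x : ℝ) : ℂ :=
  ((E / (2 * Real.pi) : ℝ) : ℂ) * ((Real.sqrt (m.factorial * n.factorial) : ℝ) : ℂ) *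
    Complex.exp (-(s : ℂ) * Complex.I * (E : ℂ) * ((t : ℂ) ^ 2 - (x : ℂ) ^ 2) / 2) *
    (Complex.exp ((s : ℂ) * Complex.I * (Real.pi : ℂ) / 4) * ((Real.sqrt E : ℝ) : ℂ)) ^ (m - n) *
    ((t : ℂ) - (s : ℂ) * (x : ℂ)) ^ (m - n) *
    ∑ p ∈ Finset.range (n + 1),
      ((s : ℂ) * Complex.I * (E : ℂ) * ((t : ℂ) ^ 2 - (x : ℂ) ^ 2)) ^ (n - p) * (-1 : ℂ) ^ p /
        (((m - p).factorial : ℂ) * ((n - p).factorial : ℂ) * (p.factorial : ℂ))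

/-- `F^±_{m,n}` for all `m, n`, with `F^±_{m,n} := conj(F^∓_{n,m})` when `m < n`. -/
noncomputable def Fmn (E s : ℝ) (m n : ℕ) (t x : ℝ) : ℂ :=
  if n ≤ m then Fge E s m n t x else (starRingEnd ℂ) (Fge E (-s) n m t x)

/-!
Writing `β = s i E / 2`, `u = t - s x` and `v = t + s x`, the function `F_{m,n}` with `m ≥ n` is a
constant times `u^(m-n) L_n^(m-n)(2 β u v) exp (-β t ^ 2 + β x ^ 2)`, and the regularization
replaces the two Gaussian parameters `(β, -β)` by `(ε + β, ε - β)`. The Gaussian integral of a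
polynomial is a linear functional `⟨·⟩` of the polynomial which is continuous in the parameters up
to the imaginary axis (without `0`), so the limit is the value of this functional at `(β, -β)`.
There, integration by parts along the light-like direction gives
`β ⟨u ^ (a + 1) v ^ c⟩ = c ⟨u ^ a v ^ (c - 1)⟩`. Hence all terms `⟨u ^ (m - p) v ^ (n - p)⟩` vanish
for `m > n`, and for `m = n` the sum collapses to `(2 - 1) ^ n` by the binomial theorem. The case
`m < n` follows by complex conjugation.
-/

section GaussianMoments

/-- The Gaussian moment `∫ t ^ j * exp (-b * t ^ 2)`, extended from `0 < re b` to all complex `b`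
by its recursion in `j`. -/
noncomputable def gaussianMoment (b : ℂ) : ℕ → ℂ
  | 0 => ((Real.pi : ℂ) / b) ^ (1 / 2 : ℂ)
  | 1 => 0
  | j + 2 => ((j : ℂ) + 1) / (2 * b) * gaussianMoment b j

variable {b : ℂ}

theorem two_mul_mul_gaussianMoment_succ (hb : b ≠ 0) (j : ℕ) :
    2 * b * gaussianMoment b (j + 1) = j * gaussianMoment b (j - 1) := by
  cases j with
  | zero => simp [gaussianMoment]
  | succ j =>
    simp only [gaussianMoment, Nat.add_sub_cancel]
    push_cast
    field_simp

theorem integrable_pow_mul_cexp_neg_mul_sq (hb : 0 < b.re) (j : ℕ) :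
    Integrable (fun t : ℝ => (t : ℂ) ^ j * cexp (-b * (t : ℂ) ^ 2)) := by
  have hj : (-1 : ℝ) < j := neg_one_lt_zero.trans_le j.cast_nonneg
  refine (integrable_rpow_mul_exp_neg_mul_sq hb hj).mono (by fun_prop) (.of_forall fun t => ?_)
  rw [norm_mul, norm_cexp_neg_mul_sq, norm_mul, Real.rpow_natCast]
  simp

theorem hasDerivAt_pow_mul_cexp_neg_mul_sq (b : ℂ) (j : ℕ) (z : ℂ) :
    HasDerivAt (fun z : ℂ => z ^ j * cexp (-b * z ^ 2))
      (j * (z ^ (j - 1) * cexp (-b * z ^ 2)) - 2 * b * (z ^ (j + 1) * cexp (-b * z ^ 2))) z := by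
  have h := (hasDerivAt_pow j z).mul (((hasDerivAt_pow 2 z).const_mul (-b)).cexp)
  refine h.congr_deriv ?_
  push_cast
  ring

theorem two_mul_mul_integral_pow_succ_mul_cexp_neg_mul_sq (hb : 0 < b.re) (j : ℕ) :
    2 * b * ∫ t : ℝ, (t : ℂ) ^ (j + 1) * cexp (-b * (t : ℂ) ^ 2) =
      j * ∫ t : ℝ, (t : ℂ) ^ (j - 1) * cexp (-b * (t : ℂ) ^ 2) := by
  have hint := integrable_pow_mul_cexp_neg_mul_sq hb
  have h := integral_eq_zero_of_hasDerivAt_of_integrable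
    (fun t : ℝ => (hasDerivAt_pow_mul_cexp_neg_mul_sq b j t).comp_ofReal)
    (((hint _).const_mul _).sub ((hint _).const_mul _)) (hint j)
  rw [integral_sub ((hint _).const_mul _) ((hint _).const_mul _),
    integral_const_mul, integral_const_mul] at h
  exact (sub_eq_zero.mp h).symm

theorem integral_pow_mul_cexp_neg_mul_sq (hb : 0 < b.re) (j : ℕ) :
    ∫ t : ℝ, (t : ℂ) ^ j * cexp (-b * (t : ℂ) ^ 2) = gaussianMoment b j := by
  have hb0 : b ≠ 0 := by
    rintro rfl
    exact hb.ne rfl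
  induction j using Nat.strong_induction_on with
  | _ j ih =>
    match j with
    | 0 => simpa [gaussianMoment] using integral_gaussian_complex hb
    | j + 1 =>
      have h := two_mul_mul_integral_pow_succ_mul_cexp_neg_mul_sq hb j
      rw [ih (j - 1) (by omega), ← two_mul_mul_gaussianMoment_succ hb0 j] at h
      exact mul_left_cancel₀ (mul_ne_zero two_ne_zero hb0) h

theorem ofReal_div_mem_slitPlane {r : ℝ} (hr : 0 < r) (hb : b ∈ slitPlane) :
    (r : ℂ) / b ∈ slitPlane := by
  obtain ⟨harg, hb0⟩ := mem_slitPlane_iff_arg.mp hb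
  refine mem_slitPlane_iff_arg.mpr ⟨?_, div_ne_zero (ofReal_ne_zero.mpr hr.ne') hb0⟩
  rw [div_eq_mul_inv, arg_real_mul _ hr, arg_inv, if_neg harg]
  linarith [neg_pi_lt_arg b]

theorem continuousAt_gaussianMoment (hb : b ∈ slitPlane) (j : ℕ) :
    ContinuousAt (fun b => gaussianMoment b j) b := by
  have hb0 : b ≠ 0 := slitPlane_ne_zero hb
  have h2b : 2 * b ≠ 0 := mul_ne_zero two_ne_zero hb0
  induction j using Nat.twoStepInduction with
  | zero =>
    exact ContinuousAt.cpow (by fun_prop (disch := assumption)) continuousAt_const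
      (ofReal_div_mem_slitPlane Real.pi_pos hb)
  | one => exact continuousAt_const
  | more j ih _ =>
    simp only [gaussianMoment]
    fun_prop (disch := assumption)

theorem gaussianMoment_zero_mul_conj (hb : b ∈ slitPlane) :
    gaussianMoment b 0 * gaussianMoment (starRingEnd ℂ b) 0 = ((Real.pi / ‖b‖ : ℝ) : ℂ) := by
  set z : ℂ := Real.pi / b with hz
  have hconj : (Real.pi : ℂ) / starRingEnd ℂ b = starRingEnd ℂ z := by
    rw [hz, map_div₀, conj_ofReal]
  have harg : z.arg ≠ Real.pi := slitPlane_arg_ne_pi (ofReal_div_mem_slitPlane Real.pi_pos hb)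
  have hhalf : (1 / 2 : ℂ) = ((1 / 2 : ℝ) : ℂ) := by push_cast; rfl
  have hnorm : ‖z‖ = Real.pi / ‖b‖ := by
    rw [hz, norm_div, norm_real, Real.norm_of_nonneg Real.pi_pos.le]
  calc gaussianMoment b 0 * gaussianMoment (starRingEnd ℂ b) 0
      = z ^ (1 / 2 : ℂ) * starRingEnd ℂ (z ^ (1 / 2 : ℂ)) := by
        rw [gaussianMoment, gaussianMoment, hconj, conj_cpow z _ harg, hhalf, conj_ofReal]
    _ = ((‖z‖ ^ (1 / 2 : ℝ)) ^ 2 : ℝ) := by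
        rw [mul_conj, normSq_eq_norm_sq, hhalf, norm_cpow_real]
    _ = ((Real.pi / ‖b‖ : ℝ) : ℂ) := by
        rw [← Real.sqrt_eq_rpow, Real.sq_sqrt (norm_nonneg z), hnorm]

end GaussianMoments

section GaussianFunctional

open MvPolynomial

variable {σ : Type*} [Fintype σ]

/-- The linear functional `P ↦ ∫ P(x) exp (-∑ i, b i * x i ^ 2)` on polynomials, extended to all
complex parameters `b` through the moments `gaussianMoment`. -/
noncomputable def gaussianFunctional (b : σ → ℂ) : MvPolynomial σ ℂ →ₗ[ℂ] ℂ :=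
  (basisMonomials σ ℂ).constr ℂ fun d => ∏ i, gaussianMoment (b i) (d i)

theorem gaussianFunctional_monomial (b : σ → ℂ) (d : σ →₀ ℕ) (c : ℂ) :
    gaussianFunctional b (monomial d c) = c * ∏ i, gaussianMoment (b i) (d i) := by
  have h : monomial d c = c • basisMonomials σ ℂ d := by
    rw [coe_basisMonomials, smul_monomial, smul_eq_mul, mul_one]
  rw [h, map_smul, gaussianFunctional, Module.Basis.constr_basis, smul_eq_mul]

theorem gaussianFunctional_one (b : σ → ℂ) :
    gaussianFunctional b 1 = ∏ i, gaussianMoment (b i) 0 := by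
  simpa using gaussianFunctional_monomial b 0 1

theorem gaussianFunctional_pderiv {b : σ → ℂ} {i : σ} (hb : b i ≠ 0) (P : MvPolynomial σ ℂ) :
    gaussianFunctional b (pderiv i P) = 2 * b i * gaussianFunctional b (X i * P) := by
  classical
  induction P using MvPolynomial.induction_on' with
  | monomial d c =>
    have hrest (e : σ →₀ ℕ) (he : ∀ j ≠ i, e j = d j) :
        ∏ j, gaussianMoment (b j) (e j) = gaussianMoment (b i) (e i) *
          ∏ j ∈ Finset.univ.erase i, gaussianMoment (b j) (d j) := by
      rw [← Finset.mul_prod_erase _ _ (Finset.mem_univ i)]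
      congr 1
      exact Finset.prod_congr rfl fun j hj => by rw [he j (Finset.ne_of_mem_erase hj)]
    rw [pderiv_monomial, X, monomial_mul, gaussianFunctional_monomial, gaussianFunctional_monomial,
      hrest (d - Finsupp.single i 1) (fun j hj => by simp [hj.symm]),
      hrest (Finsupp.single i 1 + d) (fun j hj => by simp [hj.symm])]
    simp only [Finsupp.tsub_apply, Finsupp.add_apply, Finsupp.single_eq_same, add_comm 1 (d i)]
    linear_combination (-c * ∏ j ∈ Finset.univ.erase i, gaussianMoment (b j) (d j)) *
      two_mul_mul_gaussianMoment_succ hb (d i)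
  | add P Q hP hQ => simp only [map_add, mul_add, hP, hQ]

theorem continuousAt_gaussianFunctional {b : σ → ℂ} (hb : ∀ i, b i ∈ slitPlane)
    (P : MvPolynomial σ ℂ) : ContinuousAt (fun b => gaussianFunctional b P) b := by
  induction P using MvPolynomial.induction_on' with
  | monomial d c =>
    simp only [gaussianFunctional_monomial]
    have hmoment (i : σ) : ContinuousAt (fun b : σ → ℂ => gaussianMoment (b i) (d i)) b :=
      ContinuousAt.comp (f := fun b : σ → ℂ => b i) (continuousAt_gaussianMoment (hb i) (d i))
        (continuousAt_apply i b)
    exact continuousAt_const.mul (tendsto_finsetProd _ fun i _ => hmoment i)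
  | add P Q hP hQ =>
    simp only [map_add]
    exact hP.add hQ

theorem eval_monomial_mul_prod_cexp (b : σ → ℂ) (d : σ →₀ ℕ) (c : ℂ) (x : σ → ℝ) :
    eval (fun i => (x i : ℂ)) (monomial d c) * ∏ i, cexp (-b i * (x i : ℂ) ^ 2) =
      c * ∏ i, (x i : ℂ) ^ d i * cexp (-b i * (x i : ℂ) ^ 2) := by
  rw [eval_monomial, Finsupp.prod_fintype _ _ fun i => pow_zero _, mul_assoc,
    Finset.prod_mul_distrib]

theorem integrable_eval_mul_prod_cexp {b : σ → ℂ} (hb : ∀ i, 0 < (b i).re)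
    (P : MvPolynomial σ ℂ) :
    Integrable fun x : σ → ℝ =>
      eval (fun i => (x i : ℂ)) P * ∏ i, cexp (-b i * (x i : ℂ) ^ 2) := by
  induction P using MvPolynomial.induction_on' with
  | monomial d c =>
    simp only [eval_monomial_mul_prod_cexp]
    exact (Integrable.fintype_prod fun i =>
      integrable_pow_mul_cexp_neg_mul_sq (hb i) (d i)).const_mul c
  | add P Q hP hQ =>
    simp only [map_add, add_mul]
    exact hP.add hQ

theorem integral_eval_mul_prod_cexp {b : σ → ℂ} (hb : ∀ i, 0 < (b i).re)
    (P : MvPolynomial σ ℂ) :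
    ∫ x : σ → ℝ, eval (fun i => (x i : ℂ)) P * ∏ i, cexp (-b i * (x i : ℂ) ^ 2) =
      gaussianFunctional b P := by
  induction P using MvPolynomial.induction_on' with
  | monomial d c =>
    simp only [eval_monomial_mul_prod_cexp]
    rw [integral_const_mul, gaussianFunctional_monomial,
      integral_fintype_prod_volume_eq_prod
        fun i (t : ℝ) => (t : ℂ) ^ d i * cexp (-b i * (t : ℂ) ^ 2)]
    simp only [integral_pow_mul_cexp_neg_mul_sq (hb _)]
  | add P Q hP hQ =>
    simp only [map_add, add_mul]
    rw [integral_add (integrable_eval_mul_prod_cexp hb P) (integrable_eval_mul_prod_cexp hb Q),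
      hP, hQ]

theorem integral_prod_eval_mul_cexp {b c : ℂ} (hb : 0 < b.re) (hc : 0 < c.re)
    (P : MvPolynomial (Fin 2) ℂ) :
    ∫ p : ℝ × ℝ, eval ![(p.1 : ℂ), (p.2 : ℂ)] P *
        (cexp (-b * (p.1 : ℂ) ^ 2) * cexp (-c * (p.2 : ℂ) ^ 2)) =
      gaussianFunctional ![b, c] P := by
  have hbc : ∀ i, 0 < ((![b, c] : Fin 2 → ℂ) i).re := Fin.forall_fin_two.mpr ⟨hb, hc⟩
  rw [← integral_eval_mul_prod_cexp hbc P,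
    ← (volume_preserving_finTwoArrow ℝ).integral_comp' (f := MeasurableEquiv.finTwoArrow)]
  refine integral_congr_ae (.of_forall fun x => ?_)
  have hx : ![(x 0 : ℂ), (x 1 : ℂ)] = fun i => (x i : ℂ) := by
    funext i
    fin_cases i <;> rfl
  simp [Fin.prod_univ_two, hx]

end GaussianFunctional

section LightCone

open MvPolynomial

/-- The light-cone coordinate `t - s x`, as a polynomial in `t = X 0` and `x = X 1`. -/
noncomputable def lightCone (s : ℂ) : MvPolynomial (Fin 2) ℂ := X 0 - C s * X 1

/-- The light-like derivative `∂_t + s ∂_x`; for `s ^ 2 = 1` it annihilates `t - s x`. -/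
noncomputable def lightConeDeriv (s : ℂ) :
    Derivation ℂ (MvPolynomial (Fin 2) ℂ) (MvPolynomial (Fin 2) ℂ) :=
  pderiv 0 + s • pderiv 1

theorem lightConeDeriv_lightCone (s r : ℂ) : lightConeDeriv s (lightCone r) = C (1 - s * r) := by
  simp [lightConeDeriv, lightCone, pderiv_X, smul_eq_C_mul, sub_eq_add_neg]

theorem lightConeDeriv_pow_mul_pow {s : ℂ} (hs : s * s = 1) (a c : ℕ) :
    lightConeDeriv s (lightCone s ^ a * lightCone (-s) ^ c) =
      (2 * c : ℂ) • (lightCone s ^ a * lightCone (-s) ^ (c - 1)) := by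
  have hu : lightConeDeriv s (lightCone s) = 0 := by
    rw [lightConeDeriv_lightCone, hs, sub_self, C_0]
  have hv : lightConeDeriv s (lightCone (-s)) = 2 := by
    rw [lightConeDeriv_lightCone, mul_neg, hs, sub_neg_eq_add, one_add_one_eq_two, map_ofNat]
  rw [Derivation.leibniz, Derivation.leibniz_pow, Derivation.leibniz_pow, hu, hv, smul_eq_C_mul]
  simp only [smul_eq_mul, nsmul_eq_mul, map_mul, map_ofNat, map_natCast]
  ring

variable {β s : ℂ}

theorem gaussianFunctional_lightConeDeriv (hβ : β ≠ 0) (s : ℂ) (P : MvPolynomial (Fin 2) ℂ) :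
    gaussianFunctional ![β, -β] (lightConeDeriv s P) =
      2 * β * gaussianFunctional ![β, -β] (lightCone s * P) := by
  have h0 := gaussianFunctional_pderiv (b := ![β, -β]) (i := 0) hβ P
  have h1 := gaussianFunctional_pderiv (b := ![β, -β]) (i := 1) (neg_ne_zero.mpr hβ) P
  have hmul : lightCone s * P = X 0 * P - s • (X 1 * P) := by
    rw [lightCone, smul_eq_C_mul]
    ring
  simp only [Matrix.cons_val_zero, Matrix.cons_val_one] at h0 h1
  simp only [lightConeDeriv, Derivation.add_apply, Derivation.smul_apply, hmul, map_add, map_sub,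
    map_smul, smul_eq_mul, h0, h1]
  ring

theorem mul_gaussianFunctional_lightCone_pow_succ (hβ : β ≠ 0) (hs : s * s = 1) (a c : ℕ) :
    β * gaussianFunctional ![β, -β] (lightCone s ^ (a + 1) * lightCone (-s) ^ c) =
      c * gaussianFunctional ![β, -β] (lightCone s ^ a * lightCone (-s) ^ (c - 1)) := by
  have h := gaussianFunctional_lightConeDeriv hβ s (lightCone s ^ a * lightCone (-s) ^ c)
  rw [lightConeDeriv_pow_mul_pow hs, map_smul, smul_eq_mul, ← mul_assoc, ← pow_succ'] at h
  linear_combination -h / 2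

theorem pow_mul_gaussianFunctional_lightCone_pow (hβ : β ≠ 0) (hs : s * s = 1) (a c : ℕ) :
    β ^ a * gaussianFunctional ![β, -β] (lightCone s ^ a * lightCone (-s) ^ c) =
      c.descFactorial a * gaussianFunctional ![β, -β] (lightCone (-s) ^ (c - a)) := by
  induction a generalizing c with
  | zero => simp
  | succ a ih =>
    rw [pow_succ, mul_assoc, mul_gaussianFunctional_lightCone_pow_succ hβ hs, mul_left_comm, ih]
    cases c with
    | zero => simp
    | succ c =>
      rw [Nat.succ_descFactorial_succ, Nat.add_sub_cancel, Nat.add_sub_add_right]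
      push_cast
      ring

/-- The polynomial `∑ p, (-1) ^ p / ((m - p)! (n - p)! p!) * u ^ (m - n) * (2 β u v) ^ (n - p)` in
the light-cone coordinates `u = t - s x` and `v = t + s x`; for `n ≤ m` it is
`(-1) ^ n / m! * u ^ (m - n)` times the Laguerre polynomial `L_n^(m - n)(2 β u v)`. -/
noncomputable def lightConeLaguerre (β s : ℂ) (m n : ℕ) : MvPolynomial (Fin 2) ℂ :=
  ∑ p ∈ Finset.range (n + 1),
    ((2 * β) ^ (n - p) * (-1) ^ p / ((m - p).factorial * (n - p).factorial * p.factorial)) •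
      (lightCone s ^ (m - n + (n - p)) * lightCone (-s) ^ (n - p))

theorem eval_lightConeLaguerre (β : ℂ) (hs : s * s = 1) (m n : ℕ) (t x : ℂ) :
    eval ![t, x] (lightConeLaguerre β s m n) =
      (t - s * x) ^ (m - n) * ∑ p ∈ Finset.range (n + 1),
        (2 * β * (t ^ 2 - x ^ 2)) ^ (n - p) * (-1) ^ p /
          ((m - p).factorial * (n - p).factorial * p.factorial) := by
  have huv : t ^ 2 - x ^ 2 = (t - s * x) * (t + s * x) := by
    linear_combination x ^ 2 * hs
  rw [lightConeLaguerre, map_sum, Finset.mul_sum]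
  refine Finset.sum_congr rfl fun p _ => ?_
  simp only [huv, lightCone, smul_eval, map_mul, map_pow, map_sub, eval_X, eval_C,
    Matrix.cons_val_zero, Matrix.cons_val_one, mul_pow]
  ring

theorem gaussianFunctional_lightConeLaguerre_of_lt (hβ : β ≠ 0) (hs : s * s = 1) {m n : ℕ}
    (hnm : n < m) : gaussianFunctional ![β, -β] (lightConeLaguerre β s m n) = 0 := by
  rw [lightConeLaguerre, map_sum]
  refine Finset.sum_eq_zero fun p _ => ?_
  have h := pow_mul_gaussianFunctional_lightCone_pow hβ hs (m - n + (n - p)) (n - p)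
  rw [Nat.descFactorial_of_lt (by omega), Nat.cast_zero, zero_mul] at h
  rw [map_smul, (mul_eq_zero.mp h).resolve_left (pow_ne_zero _ hβ), smul_zero]

theorem gaussianFunctional_lightConeLaguerre_self (hβ : β ≠ 0) (hs : s * s = 1) (n : ℕ) :
    gaussianFunctional ![β, -β] (lightConeLaguerre β s n n) =
      gaussianFunctional ![β, -β] 1 / n.factorial := by
  have hbinom : ∑ p ∈ Finset.range (n + 1), (-1 : ℂ) ^ p * 2 ^ (n - p) * n.choose p = 1 := by
    rw [← add_pow]
    norm_num
  have hfac (k : ℕ) : (k.factorial : ℂ) ≠ 0 := Nat.cast_ne_zero.mpr k.factorial_ne_zero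
  rw [lightConeLaguerre, map_sum]
  calc _ = ∑ p ∈ Finset.range (n + 1), gaussianFunctional ![β, -β] 1 / n.factorial *
        ((-1 : ℂ) ^ p * 2 ^ (n - p) * n.choose p) := Finset.sum_congr rfl fun p hp => ?_
    _ = gaussianFunctional ![β, -β] 1 / n.factorial := by
      rw [← Finset.mul_sum, hbinom, mul_one]
  have hpn : p ≤ n := Finset.mem_range_succ_iff.mp hp
  have h := pow_mul_gaussianFunctional_lightCone_pow hβ hs (n - p) (n - p)
  rw [Nat.descFactorial_self, Nat.sub_self, pow_zero] at h
  have hn := hfac n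
  have hnp := hfac (n - p)
  have hp := hfac p
  rw [map_smul, smul_eq_mul, Nat.sub_self, zero_add, Nat.cast_choose ℂ hpn, mul_pow]
  field_simp
  linear_combination h

end LightCone

section RegularizedIntegral

theorem integral_ofReal_mul_conj {α : Type*} [MeasurableSpace α] (μ : Measure α) (g : α → ℝ)
    (f : α → ℂ) :
    ∫ a, (g a : ℂ) * starRingEnd ℂ (f a) ∂μ = starRingEnd ℂ (∫ a, (g a : ℂ) * f a ∂μ) := by
  simp only [← integral_conj, map_mul, conj_ofReal]

variable {E s : ℝ}

/-- The parameter `β = s i E / 2` of the oscillating factor `exp (-β (t ^ 2 - x ^ 2))` of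
`F^±_{m,n}`. -/
noncomputable def oscParam (E s : ℝ) : ℂ := s * I * E / 2

/-- The constant in front of the oscillating factor and the polynomial part of `F^±_{m,n}`. -/
noncomputable def normConst (E s : ℝ) (m n : ℕ) : ℂ :=
  ((E / (2 * Real.pi) : ℝ) : ℂ) * ((Real.sqrt (m.factorial * n.factorial) : ℝ) : ℂ) *
    (cexp (s * I * Real.pi / 4) * ((Real.sqrt E : ℝ) : ℂ)) ^ (m - n)

theorem Fge_eq_normConst_mul (E : ℝ) (hs : s * s = 1) (m n : ℕ) (t x : ℝ) :
    Fge E s m n t x = normConst E s m n *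
      (MvPolynomial.eval ![(t : ℂ), (x : ℂ)] (lightConeLaguerre (oscParam E s) s m n) *
        cexp (-oscParam E s * ((t : ℂ) ^ 2 - (x : ℂ) ^ 2))) := by
  have hexp : -(s : ℂ) * I * E * ((t : ℂ) ^ 2 - (x : ℂ) ^ 2) / 2 =
      -oscParam E s * ((t : ℂ) ^ 2 - (x : ℂ) ^ 2) := by
    rw [oscParam]
    ring
  have hfreq : (s : ℂ) * I * E = 2 * oscParam E s := by
    rw [oscParam]
    ring
  rw [Fge, hexp, hfreq, eval_lightConeLaguerre _ (by exact_mod_cast hs), normConst]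
  ring

theorem integral_exp_mul_Fge (E : ℝ) (hs : s * s = 1) (m n : ℕ) {ε : ℝ} (hε : 0 < ε) :
    ∫ p : ℝ × ℝ, ((Real.exp (-(ε * (p.1 ^ 2 + p.2 ^ 2))) : ℝ) : ℂ) * Fge E s m n p.1 p.2 =
      normConst E s m n * gaussianFunctional ![ε + oscParam E s, ε - oscParam E s]
        (lightConeLaguerre (oscParam E s) s m n) := by
  have hre : (oscParam E s).re = 0 := by simp [oscParam]
  rw [← integral_prod_eval_mul_cexp (by simpa [hre]) (by simpa [hre]), ← integral_const_mul]
  refine integral_congr_ae (.of_forall fun p => ?_)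
  simp only
  rw [Fge_eq_normConst_mul E hs, mul_left_comm, mul_left_comm (ofReal _), ofReal_exp, ← exp_add,
    ← exp_add]
  congr 3
  push_cast
  ring

theorem oscParam_im_ne_zero (hE : 0 < E) (hs : s * s = 1) : (oscParam E s).im ≠ 0 := by
  have hs0 : s ≠ 0 := left_ne_zero_of_mul_eq_one hs
  simp [oscParam, hs0, hE.ne']

theorem gaussianFunctional_oscParam_one (hE : 0 < E) (hs : s * s = 1) :
    gaussianFunctional ![oscParam E s, -oscParam E s] 1 = ((2 * Real.pi / E : ℝ) : ℂ) := by
  have hconj : -oscParam E s = starRingEnd ℂ (oscParam E s) := by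
    simp only [oscParam, map_div₀, map_mul, conj_ofReal, conj_I, map_ofNat]
    ring
  have hnorm : ‖oscParam E s‖ = E / 2 := by
    have habs : |s| = 1 := (abs_eq zero_le_one).mpr (mul_self_eq_one_iff.mp hs)
    simp [oscParam, habs, abs_of_pos hE]
  simp only [gaussianFunctional_one, Fin.prod_univ_two, Matrix.cons_val_zero, Matrix.cons_val_one]
  rw [hconj, gaussianMoment_zero_mul_conj (.inr (oscParam_im_ne_zero hE hs)), hnorm,
    div_div_eq_mul_div, mul_comm Real.pi]

theorem normConst_self (E s : ℝ) (n : ℕ) :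
    normConst E s n n = ((E / (2 * Real.pi) : ℝ) : ℂ) * n.factorial := by
  rw [normConst, Nat.sub_self, pow_zero, mul_one, Real.sqrt_mul_self (Nat.cast_nonneg _),
    ofReal_natCast]

theorem normConst_mul_gaussianFunctional (hE : 0 < E) (hs : s * s = 1) {m n : ℕ} (hnm : n ≤ m) :
    normConst E s m n * gaussianFunctional ![oscParam E s, -oscParam E s]
      (lightConeLaguerre (oscParam E s) s m n) = if m = n then 1 else 0 := by
  have hβ : oscParam E s ≠ 0 := fun h => oscParam_im_ne_zero hE hs (by rw [h, zero_im])
  have hs' : (s : ℂ) * s = 1 := by exact_mod_cast hs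
  rcases hnm.eq_or_lt with rfl | hlt
  · have hfac : (n.factorial : ℂ) ≠ 0 := Nat.cast_ne_zero.mpr n.factorial_ne_zero
    have hπ : (Real.pi : ℂ) ≠ 0 := ofReal_ne_zero.mpr Real.pi_ne_zero
    have hE' : (E : ℂ) ≠ 0 := ofReal_ne_zero.mpr hE.ne'
    rw [gaussianFunctional_lightConeLaguerre_self hβ hs', normConst_self,
      gaussianFunctional_oscParam_one hE hs, if_pos rfl]
    push_cast
    field_simp
  · rw [gaussianFunctional_lightConeLaguerre_of_lt hβ hs' hlt, mul_zero, if_neg hlt.ne']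

theorem tendsto_gaussianFunctional_regularized {β : ℂ} (hβ : β.im ≠ 0)
    (P : MvPolynomial (Fin 2) ℂ) :
    Tendsto (fun ε : ℝ => gaussianFunctional ![ε + β, ε - β] P) (nhds 0)
      (nhds (gaussianFunctional ![β, -β] P)) := by
  have hslit : ∀ i, (![β, -β] : Fin 2 → ℂ) i ∈ slitPlane :=
    Fin.forall_fin_two.mpr ⟨.inr hβ, .inr (by simpa using hβ)⟩
  have hparam : Continuous fun ε : ℝ => (![ε + β, ε - β] : Fin 2 → ℂ) := by fun_prop
  refine (continuousAt_gaussianFunctional hslit P).tendsto.comp ?_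
  simpa using hparam.tendsto 0

theorem tendsto_integral_exp_mul_Fge (hE : 0 < E) (hs : s * s = 1) {m n : ℕ} (hnm : n ≤ m) :
    Tendsto
      (fun ε : ℝ => ∫ p : ℝ × ℝ,
        ((Real.exp (-(ε * (p.1 ^ 2 + p.2 ^ 2))) : ℝ) : ℂ) * Fge E s m n p.1 p.2)
      (nhdsWithin 0 (Set.Ioi 0)) (nhds (if m = n then 1 else 0)) := by
  rw [← normConst_mul_gaussianFunctional hE hs hnm]
  refine (((tendsto_gaussianFunctional_regularized (oscParam_im_ne_zero hE hs) _).mono_left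
    nhdsWithin_le_nhds).const_mul _).congr' ?_
  filter_upwards [self_mem_nhdsWithin] with ε hε
  exact (integral_exp_mul_Fge E hs m n hε).symm

end RegularizedIntegral

/-- the regularized integral of `F^±_{n,m}` over `ℝ²` exists and
equals the Kronecker delta `δ_{nm}`. -/
theorem Fmn_integral_delta (E : ℝ) (hE : 0 < E) (n m : ℕ) (s : ℝ)
    (hs : s = 1 ∨ s = -1) :
    Filter.Tendsto
      (fun ε : ℝ => ∫ p : ℝ × ℝ,
        ((Real.exp (-(ε * (p.1 ^ 2 + p.2 ^ 2))) : ℝ) : ℂ) * Fmn E s n m p.1 p.2)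
      (nhdsWithin (0 : ℝ) (Set.Ioi 0)) (nhds (if n = m then 1 else 0)) := by
  have hss : s * s = 1 := mul_self_eq_one_iff.mpr hs
  rcases le_or_gt m n with hmn | hnm
  · simpa only [Fmn, if_pos hmn] using tendsto_integral_exp_mul_Fge hE hss hmn
  · have hss' : -s * -s = 1 := by rwa [neg_mul_neg]
    have hconj := (continuous_conj.tendsto _).comp (tendsto_integral_exp_mul_Fge hE hss' hnm.le)
    simpa only [Fmn, if_neg hnm.not_ge, if_neg hnm.ne, if_neg hnm.ne', map_zero,
      Function.comp_def, integral_ofReal_mul_conj] using hconj
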